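/- Let δ be a positive integer, z₀, …, z_ν ∈ ℕ, and P(z₀, …, z_ν) = Σ_{i₀+⋯+i_ν ≤ δ} a_{i₀,…,i_ν} z₀^{i₀}⋯z_ν^{i_ν} with integer coefficients of absolute value at most L (L ∈ ℤ⁺). Let B be any integer with B > 2(1 + z₀ + ⋯ + z_ν)^δ δ! L, and define C(x) = (1 + Σ_{i=0}^ν zᵢx^{(δ+1)^i})^δ and D(x) = Σ i₀!⋯i_ν!(δ−Σi_j)! a_{i₀,…,i_ν} x^{(δ+1)^{ν+1} − Σ_j i_j(δ+1)^j}. Then P(z₀, …, z_ν) = 0 if and only if there exists an integer z with (2C(B)D(B) − B^{(δ+1)^{ν+1}})/(2B^{(δ+1)^{ν+1}+1}) ≤ z ≤ (2C(B)D(B) + B^{(δ+1)^{ν+1}})/(2B^{(δ+1)^{ν+1}+1}). -/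

import Mathlib

open Polynomial in
theorem aux_expand (B : ℤ) (hB0 : 0 < B) (N : ℕ) : ∀ F : ℤ[X],
    (∀ k, 2 * |F.coeff k| < B) →
    ∃ r w : ℤ, F.eval B = r + F.coeff N * B ^ N + w * B ^ (N+1) ∧ 2 * |r| < B ^ N := by
  induction N with
  | zero =>
    intro F h
    refine ⟨0, F.divX.eval B, ?_, by simp⟩
    conv_lhs => rw [← divX_mul_X_add F]
    simp; ring
  | succ N ih =>
    intro F h
    obtain ⟨r, w, h1, h2⟩ := ih F.divX (fun k => by rw [coeff_divX]; exact h _)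
    refine ⟨F.coeff 0 + B * r, w, ?_, ?_⟩
    · conv_lhs => rw [← divX_mul_X_add F]
      rw [coeff_divX] at h1
      simp [h1]; ring
    · have h0 := h 0
      have h3 : |F.coeff 0 + B * r| ≤ |F.coeff 0| + B * |r| := by
        refine (abs_add_le _ _).trans ?_
        rw [abs_mul, abs_of_pos hB0]
      have h4 : B * (2 * |r|) ≤ B * (B ^ N - 1) := by
        apply mul_le_mul_of_nonneg_left _ hB0.le
        omega
      rw [pow_succ]
      nlinarith

open Polynomial in
theorem aux_iff (B : ℤ) (hB0 : 0 < B) (N : ℕ) (F : ℤ[X])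
    (h : ∀ k, 2 * |F.coeff k| < B) :
    F.coeff N = 0 ↔ ∃ zz : ℤ, 2 * |F.eval B - zz * B ^ (N+1)| ≤ B ^ N := by
  obtain ⟨r, w, h1, h2⟩ := aux_expand B hB0 N F h
  have hp : 0 < B ^ N := pow_pos hB0 N
  constructor
  · intro h0
    refine ⟨w, ?_⟩
    rw [h1, h0]
    have : r + 0 * B ^ N + w * B ^ (N+1) - w * B ^ (N+1) = r := by ring
    rw [this]; exact h2.le
  · rintro ⟨v, hv⟩
    have e : F.eval B - v * B ^ (N+1) = r + (F.coeff N + (w - v) * B) * B ^ N := by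
      rw [h1]; ring
    rw [e] at hv
    have h3 : |(F.coeff N + (w - v) * B) * B ^ N| < 1 * B ^ N := by
      have h4 : 2 * (r + (F.coeff N + (w - v) * B) * B ^ N) ≤ B ^ N := by
        have := le_abs_self (r + (F.coeff N + (w - v) * B) * B ^ N); linarith
      have h5 : -(B ^ N) ≤ 2 * (r + (F.coeff N + (w - v) * B) * B ^ N) := by
        have := neg_abs_le (r + (F.coeff N + (w - v) * B) * B ^ N); linarith
      have h6 := le_abs_self r
      have h7 := neg_abs_le r
      rw [abs_lt]; constructor <;> linarith
    rw [abs_mul, abs_of_pos hp] at h3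
    have h4 := lt_of_mul_lt_mul_right h3 hp.le
    rw [Int.abs_lt_one_iff] at h4
    apply Int.eq_zero_of_abs_lt_dvd (m := B)
    · exact ⟨v - w, by linarith⟩
    · have := h N
      have := abs_nonneg (F.coeff N)
      linarith

open Polynomial in
theorem aux_coeff_nonneg_mul {p q : ℤ[X]} (hp : ∀ k, 0 ≤ p.coeff k) (hq : ∀ k, 0 ≤ q.coeff k) :
    ∀ k, 0 ≤ (p * q).coeff k := by
  intro k
  rw [coeff_mul]
  exact Finset.sum_nonneg fun x _ => mul_nonneg (hp _) (hq _)

open Polynomial in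
theorem aux_coeff_nonneg_pow {p : ℤ[X]} (hp : ∀ k, 0 ≤ p.coeff k) (n : ℕ) :
    ∀ k, 0 ≤ (p ^ n).coeff k := by
  induction n with
  | zero => intro k; rw [pow_zero, coeff_one]; split_ifs <;> simp
  | succ n ih => rw [pow_succ]; exact aux_coeff_nonneg_mul ih hp

open Polynomial in
theorem aux_partial {p : ℤ[X]} (hp : ∀ k, 0 ≤ p.coeff k) (n : ℕ) :
    ∑ k ∈ Finset.range (n+1), p.coeff k ≤ p.eval 1 := by
  have h1 := Polynomial.eval_eq_sum_range' (p := p) (n := (n + 1) + (p.natDegree + 1)) (by omega) 1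
  rw [h1]
  simp only [one_pow, mul_one]
  exact Finset.sum_le_sum_of_subset_of_nonneg (by
    intro x; simp; omega) (fun i _ _ => hp i)

open Polynomial in
theorem aux_coeff_mul {p q : ℤ[X]} (hp : ∀ k, 0 ≤ p.coeff k) (M : ℤ) (hM : 0 ≤ M)
    (hq : ∀ k, |q.coeff k| ≤ M) (k : ℕ) : |(p * q).coeff k| ≤ p.eval 1 * M := by
  rw [coeff_mul, Finset.Nat.sum_antidiagonal_eq_sum_range_succ_mk]
  refine (Finset.abs_sum_le_sum_abs _ _).trans ?_
  refine le_trans ?_ (mul_le_mul_of_nonneg_right (aux_partial hp k) hM)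
  rw [Finset.sum_mul]
  refine Finset.sum_le_sum fun x _ => ?_
  rw [abs_mul, abs_of_nonneg (hp _)]
  exact mul_le_mul_of_nonneg_left (hq _) (hp _)

/-- The multinomial coefficient of the generating polynomial. -/
theorem aux_C_coeff (δ ν : ℕ) (z : Fin (ν+1) → ℕ) (i : Fin (ν+1) → Fin (δ+1))
    (hi : ∑ j, (i j : ℕ) ≤ δ) :
    (((∏ j, Nat.factorial (i j)) * Nat.factorial (δ - ∑ j, (i j : ℕ)) : ℕ) : ℤ) *
    (((1 + ∑ j : Fin (ν+1), Polynomial.C (z j : ℤ) * Polynomial.X ^ ((δ+1) ^ (j : ℕ))) ^ δ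
      : Polynomial ℤ)).coeff (∑ j : Fin (ν+1), (i j : ℕ) * (δ+1) ^ (j : ℕ)) =
    (Nat.factorial δ : ℤ) * ∏ j, (z j : ℤ) ^ (i j : ℕ) := by
  classical
  let f : Option (Fin (ν+1)) → Polynomial ℤ := fun o => o.elim 1
    (fun j => Polynomial.C (z j : ℤ) * Polynomial.X ^ ((δ+1) ^ (j : ℕ)))
  have hf : (1 + ∑ j : Fin (ν+1), Polynomial.C (z j : ℤ) * Polynomial.X ^ ((δ+1) ^ (j : ℕ)))
      = ∑ o, f o := by rw [Fintype.sum_option]; rfl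
  have hterm : ∀ k : Option (Fin (ν+1)) → ℕ, ∏ o, f o ^ k o =
      Polynomial.C (∏ j, (z j : ℤ) ^ k (some j)) *
        Polynomial.X ^ (∑ j : Fin (ν+1), k (some j) * (δ+1) ^ (j : ℕ)) := by
    intro k
    rw [Fintype.prod_option]
    simp only [f, Option.elim, one_pow, one_mul, mul_pow, Finset.prod_mul_distrib, ← pow_mul,
      Finset.prod_pow_eq_pow_sum, map_prod, map_pow]
    simp only [mul_comm]
  let k0 : Option (Fin (ν+1)) → ℕ := fun o => o.elim (δ - ∑ j, (i j : ℕ)) (fun j => (i j : ℕ))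
  have hk0 : ∑ o, k0 o = δ := by
    rw [Fintype.sum_option]; simp only [k0, Option.elim]; omega
  rw [hf, Finset.sum_pow_eq_sum_piAntidiag, Polynomial.finset_sum_coeff,
    Finset.sum_eq_single k0]
  · rw [hterm, ← Polynomial.C_eq_natCast, ← mul_assoc, ← Polynomial.C_mul,
      Polynomial.coeff_C_mul_X_pow, if_pos (by simp [k0])]
    have hs := Nat.multinomial_spec (Finset.univ) k0
    rw [hk0, Fintype.prod_option] at hs
    simp only [k0, Option.elim] at hs ⊢
    rw [← hs]
    push_cast
    ring
  · intro k hk hne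
    rw [hterm, ← Polynomial.C_eq_natCast, ← mul_assoc, ← Polynomial.C_mul,
      Polynomial.coeff_C_mul_X_pow, if_neg]
    intro he
    apply hne
    rw [Finset.mem_piAntidiag] at hk
    have hks : ∑ o, k o = δ := hk.1
    have hle : ∀ o, k o < δ + 1 := fun o => by
      have := Finset.single_le_sum (f := k) (fun _ _ => Nat.zero_le _) (Finset.mem_univ o)
      omega
    have heq : (fun j => (⟨k (some j), hle _⟩ : Fin (δ+1))) = i := by
      apply finFunctionFinEquiv.injective
      apply Fin.ext
      rw [finFunctionFinEquiv_apply, finFunctionFinEquiv_apply]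
      exact he.symm
    have hsome : ∀ j, k (some j) = i j := fun j => by rw [← heq]
    rw [Fintype.sum_option] at hks
    simp only [hsome] at hks
    funext o
    cases o with
    | none => simp only [k0, Option.elim]; omega
    | some j => exact hsome j
  · intro h
    exact absurd (by simp [hk0]) h

theorem aux_fact (δ ν : ℕ) (i : Fin (ν+1) → Fin (δ+1)) (hi : ∑ j, (i j : ℕ) ≤ δ) :
    (∏ j, Nat.factorial (i j)) * Nat.factorial (δ - ∑ j, (i j : ℕ)) ≤ Nat.factorial δ := by
  apply Nat.le_of_dvd (Nat.factorial_pos _)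
  refine (mul_dvd_mul_right (Nat.prod_factorial_dvd_factorial_sum _ _) _).trans ?_
  exact Nat.factorial_mul_factorial_dvd_factorial hi

open Polynomial in
theorem P_eq_zero_iff_interval (δ ν : ℕ) (hδ : 0 < δ) (L : ℤ) (hL : 0 < L)
    (z : Fin (ν+1) → ℕ)
    (a : (Fin (ν+1) → Fin (δ+1)) → ℤ)
    (ha0 : ∀ i, δ < ∑ j, (i j : ℕ) → a i = 0)
    (haL : ∀ i, |a i| ≤ L)
    (B : ℤ)
    (hB : 2 * (1 + ∑ j, (z j : ℤ)) ^ δ * (Nat.factorial δ : ℤ) * L < B)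
    (C D : ℤ[X])
    (hC : C = (1 + ∑ j : Fin (ν+1), Polynomial.C (z j : ℤ) * X ^ ((δ+1) ^ (j : ℕ))) ^ δ)
    (hD : D = ∑ i : Fin (ν+1) → Fin (δ+1),
        Polynomial.C (((∏ j, Nat.factorial (i j)) *
            Nat.factorial (δ - ∑ j, (i j : ℕ)) : ℕ) * a i) *
          X ^ ((δ+1) ^ (ν+1) - ∑ j : Fin (ν+1), (i j : ℕ) * (δ+1) ^ (j : ℕ))) :
    (∑ i : Fin (ν+1) → Fin (δ+1), a i * ∏ j, (z j : ℤ) ^ (i j : ℕ)) = 0 ↔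
      ∃ zz : ℤ,
        ((2 * C.eval B * D.eval B - B ^ ((δ+1) ^ (ν+1)) : ℤ) : ℚ) /
            ((2 * B ^ ((δ+1) ^ (ν+1) + 1) : ℤ) : ℚ) ≤ (zz : ℚ) ∧
        (zz : ℚ) ≤ ((2 * C.eval B * D.eval B + B ^ ((δ+1) ^ (ν+1)) : ℤ) : ℚ) /
            ((2 * B ^ ((δ+1) ^ (ν+1) + 1) : ℤ) : ℚ) := by
  have hzs : (0:ℤ) ≤ ∑ j, (z j : ℤ) := Finset.sum_nonneg fun j _ => by positivity
  have hB0 : 0 < B := lt_of_le_of_lt (by positivity) hB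
  have hlt : ∀ i : Fin (ν+1) → Fin (δ+1),
      ∑ j : Fin (ν+1), (i j : ℕ) * (δ+1) ^ (j : ℕ) < (δ+1) ^ (ν+1) := fun i => by
    rw [← finFunctionFinEquiv_apply]; exact (finFunctionFinEquiv i).2
  have hinj : ∀ i i' : Fin (ν+1) → Fin (δ+1),
      ∑ j : Fin (ν+1), (i j : ℕ) * (δ+1) ^ (j : ℕ) =
      ∑ j : Fin (ν+1), (i' j : ℕ) * (δ+1) ^ (j : ℕ) → i = i' := fun i i' h => by
    apply finFunctionFinEquiv.injective
    apply Fin.ext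
    rw [finFunctionFinEquiv_apply, finFunctionFinEquiv_apply]
    exact h
  have hdb : ∀ i : Fin (ν+1) → Fin (δ+1), |(((∏ j, Nat.factorial (i j)) *
            Nat.factorial (δ - ∑ j, (i j : ℕ)) : ℕ) : ℤ) * a i| ≤ (Nat.factorial δ : ℤ) * L := by
    intro i
    by_cases hi : δ < ∑ j, (i j : ℕ)
    · rw [ha0 i hi, mul_zero, abs_zero]; positivity
    · rw [abs_mul, Nat.abs_cast]
      exact mul_le_mul (by exact_mod_cast aux_fact δ ν i (not_lt.mp hi)) (haL i)
        (abs_nonneg _) (by positivity)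
  have hDc : ∀ k, |D.coeff k| ≤ (Nat.factorial δ : ℤ) * L := by
    intro k
    rw [hD, finset_sum_coeff]
    simp only [coeff_C_mul_X_pow]
    by_cases hex : ∃ i : Fin (ν+1) → Fin (δ+1),
        k = (δ+1) ^ (ν+1) - ∑ j : Fin (ν+1), (i j : ℕ) * (δ+1) ^ (j : ℕ)
    · obtain ⟨i, hi⟩ := hex
      rw [Finset.sum_eq_single i]
      · rw [if_pos hi]; exact hdb i
      · intro i' _ hne
        apply if_neg
        intro h
        apply hne
        apply hinj
        have h1 := hlt i
        have h2 := hlt i'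
        omega
      · intro h; exact absurd (Finset.mem_univ _) h
    · rw [Finset.sum_eq_zero]
      · rw [abs_zero]; positivity
      · intro i _
        apply if_neg
        intro h; exact hex ⟨i, h⟩
  have hCc : ∀ k, 0 ≤ C.coeff k := by
    rw [hC]
    apply aux_coeff_nonneg_pow
    intro k
    rw [coeff_add, finset_sum_coeff]
    refine add_nonneg ?_ (Finset.sum_nonneg fun j _ => ?_)
    · rw [coeff_one]; split_ifs <;> simp
    · rw [coeff_C_mul_X_pow]; split_ifs <;> simp
  have hC1 : C.eval 1 = (1 + ∑ j, (z j : ℤ)) ^ δ := by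
    rw [hC]; simp [eval_finset_sum]
  have hF : ∀ k, 2 * |(C * D).coeff k| < B := by
    intro k
    have h := aux_coeff_mul hCc _ (by positivity) hDc k
    rw [hC1] at h
    refine lt_of_le_of_lt ?_ hB
    calc _ ≤ 2 * ((1 + ∑ j, (z j : ℤ)) ^ δ * ((Nat.factorial δ : ℤ) * L)) := by linarith
      _ = _ := by ring
  have hN : (C * D).coeff ((δ+1) ^ (ν+1)) =
      (Nat.factorial δ : ℤ) * ∑ i : Fin (ν+1) → Fin (δ+1), a i * ∏ j, (z j : ℤ) ^ (i j : ℕ) := by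
    conv_lhs => rw [hD]
    rw [Finset.mul_sum, finset_sum_coeff, Finset.mul_sum]
    refine Finset.sum_congr rfl fun i _ => ?_
    by_cases hi : δ < ∑ j, (i j : ℕ)
    · rw [ha0 i hi]; simp
    · have h1 := aux_C_coeff δ ν z i (not_lt.mp hi)
      rw [← hC] at h1
      have h2 : (C * (Polynomial.C ((((∏ j, Nat.factorial (i j)) *
            Nat.factorial (δ - ∑ j, (i j : ℕ)) : ℕ) : ℤ) * a i) *
          X ^ ((δ+1) ^ (ν+1) - ∑ j : Fin (ν+1), (i j : ℕ) * (δ+1) ^ (j : ℕ)))).coeff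
            ((δ+1) ^ (ν+1)) = ((((∏ j, Nat.factorial (i j)) *
            Nat.factorial (δ - ∑ j, (i j : ℕ)) : ℕ) : ℤ) * a i) *
            C.coeff (∑ j : Fin (ν+1), (i j : ℕ) * (δ+1) ^ (j : ℕ)) := by
        rw [mul_left_comm, coeff_C_mul, coeff_mul_X_pow', if_pos (Nat.sub_le _ _),
          Nat.sub_sub_self (hlt i).le]
      rw [h2, mul_right_comm, h1]
      ring
  have hfac : (Nat.factorial δ : ℤ) ≠ 0 := by exact_mod_cast Nat.factorial_ne_zero δ
  have key := aux_iff B hB0 ((δ+1) ^ (ν+1)) (C * D) hF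
  rw [hN, mul_eq_zero, or_iff_right hfac] at key
  rw [key]
  refine exists_congr fun v => ?_
  have hpos : (0:ℚ) < ((2 * B ^ ((δ+1) ^ (ν+1) + 1) : ℤ) : ℚ) := by
    exact_mod_cast (by positivity : (0:ℤ) < 2 * B ^ ((δ+1) ^ (ν+1) + 1))
  rw [div_le_iff₀ hpos, le_div_iff₀ hpos, eval_mul]
  norm_cast
  generalize (δ+1) ^ (ν+1) = N
  have e : 2 * |eval B C * eval B D - v * B ^ (N+1)| =
      |2 * eval B C * eval B D - v * (2 * B ^ (N+1))| := by
    rw [← abs_two, ← abs_mul, abs_two]; congr 1; ring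
  rw [e, abs_le]
  constructor <;> rintro ⟨h1, h2⟩ <;> constructor <;> linarith
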